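/- arXiv:1704.06428 — 3 statements merged into one kernel-verified Lean document; each statement's English description precedes it below -/
import Mathlib

section
/- Let q = dim 𝓧 and let {β^{(1)},…,β^{(q)}} be an orthonormal basis of 𝓧 such that Tβ^{(j)} = ρ_j β^{(j)} with ρ₁ ≥ ρ₂ ≥ ⋯ ≥ ρ_q, and set α^{(j)} = Φ^{−1/2}β^{(j)}. Define C₁ = {α ∈ 𝓧 : Σ_{k=1}^K ⟨α_k, V_k α_k⟩_k = 1} and, for j ≥ 2, C_j = {α ∈ C₁ : Σ_{k=1}^K ⟨α_k^{(r)}, V_k α_k⟩_k = 0 for all r ∈ {1,…,j−1}}. Then for every j ∈ {1,…,q}: (a) α^{(j)} ∈ C_j; (b) E[⟨α, X⟩_𝓧²] ≤ E[⟨α^{(j)}, X⟩_𝓧²] for every α ∈ C_j; and (c) ρ_j = ⟨β^{(j)}, Tβ^{(j)}⟩_𝓧 = φ(α^{(j)}). -/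
open MeasureTheory ContinuousLinearMap Filter
open scoped RealInnerProductSpace Topology NNReal

noncomputable section
open scoped Classical

/-- The rank-one operator `x ⊗ y : h ↦ ⟨x, h⟩ y`. -/
def tens {F G : Type*} [NormedAddCommGroup F] [InnerProductSpace ℝ F]
    [NormedAddCommGroup G] [NormedSpace ℝ G] (x : F) (y : G) : F →L[ℝ] G :=
  (innerSL ℝ x).smulRight y

variable {K : ℕ}

/-- The canonical projection `τ_k : 𝓧 → 𝓧_k`, where `𝓧 = 𝓧₁ × ⋯ × 𝓧_K` carries the
inner product `⟨α, β⟩ = Σ_k ⟨α_k, β_k⟩` (realized as `PiLp 2 𝓧`). -/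
def tau (𝓧 : Fin K → Type*) [∀ k, NormedAddCommGroup (𝓧 k)]
    [∀ k, InnerProductSpace ℝ (𝓧 k)] (k : Fin K) : PiLp 2 𝓧 →L[ℝ] 𝓧 k :=
  PiLp.proj 2 𝓧 k

variable {𝓧 : Fin K → Type*} [∀ k, NormedAddCommGroup (𝓧 k)]
  [∀ k, InnerProductSpace ℝ (𝓧 k)] [∀ k, FiniteDimensional ℝ (𝓧 k)]
variable {Ω : Type*} [MeasurableSpace Ω]

/-- The covariance operator `V_{kℓ} = E[X_ℓ ⊗ X_k] : 𝓧_ℓ → 𝓧_k` (a Bochner integral). -/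
def Vcov (P : Measure Ω) (X : Ω → PiLp 2 𝓧) (k l : Fin K) : 𝓧 l →L[ℝ] 𝓧 k :=
  ∫ ω, tens (tau 𝓧 l (X ω)) (tau 𝓧 k (X ω)) ∂P

/-- `Φ = Σ_k τ_k* V_k τ_k`. -/
def PhiOp (P : Measure Ω) (X : Ω → PiLp 2 𝓧) : PiLp 2 𝓧 →L[ℝ] PiLp 2 𝓧 :=
  ∑ k, ContinuousLinearMap.adjoint (tau 𝓧 k) ∘L Vcov P X k k ∘L tau 𝓧 k

/-- `Ψ = Σ_{k≠ℓ} τ_k* V_{kℓ} τ_ℓ`. -/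
def PsiOp (P : Measure Ω) (X : Ω → PiLp 2 𝓧) : PiLp 2 𝓧 →L[ℝ] PiLp 2 𝓧 :=
  ∑ k, ∑ l, if l = k then 0 else
    ContinuousLinearMap.adjoint (tau 𝓧 k) ∘L Vcov P X k l ∘L tau 𝓧 l

/-- `S` is the inverse of the positive square root of `A` (i.e. `S = A^{-1/2}`):
`S` is positive (hence self-adjoint) and `S ∘ S` is a two-sided inverse of `A`. -/
def IsInvSqrt {F : Type*} [NormedAddCommGroup F] [InnerProductSpace ℝ F]
    [CompleteSpace F] (A S : F →L[ℝ] F) : Prop :=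
  S.IsPositive ∧ (S ∘L S) ∘L A = 1 ∧ A ∘L (S ∘L S) = 1

/-- `φ(α) = Σ_{k≠ℓ} ⟨α_k, V_{kℓ} α_ℓ⟩`. -/
def phiForm (P : Measure Ω) (X : Ω → PiLp 2 𝓧) (a : PiLp 2 𝓧) : ℝ :=
  ∑ k, ∑ l, if l = k then 0 else ⟪tau 𝓧 k a, Vcov P X k l (tau 𝓧 l a)⟫

/-!
Since `∑ k, τ_k* τ_k = 1`, the operator `Φ + Ψ` is `E[X ⊗ X]`, so
`E[⟨α, X⟩²] = ⟨α, Φ α⟩ + ⟨α, Ψ α⟩`, where the first term equals `1` on the constraint set.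
Writing `α = Φ^{-1/2} γ` turns `⟨α, Φ α'⟩` into `⟨γ, γ'⟩` and `⟨α, Ψ α⟩` into `⟨γ, T γ⟩`: what is
left is that `β^{(j)}` maximizes the quadratic form of `T` among the unit vectors orthogonal to
`β^{(1)}, …, β^{(j-1)}`.
-/

section Eigenbasis

variable {𝕜 E ι : Type*} [RCLike 𝕜] [NormedAddCommGroup E] [InnerProductSpace 𝕜 E] [Fintype ι]

theorem inner_map_self_eq_sum_mul_sq_norm_inner (b : OrthonormalBasis ι 𝕜 E) {T : E →ₗ[𝕜] E}
    {ρ : ι → 𝕜} (hT : ∀ i, T (b i) = ρ i • b i) (x : E) :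
    inner 𝕜 x (T x) = ∑ i, ρ i * (‖inner 𝕜 (b i) x‖ : 𝕜) ^ 2 := by
  have map_eq : T x = ∑ i, inner 𝕜 (b i) x • ρ i • b i := by
    conv_lhs => rw [← b.sum_repr' x]
    simp only [map_sum, map_smul, hT]
  rw [map_eq, inner_sum]
  refine Finset.sum_congr rfl fun i _ => ?_
  rw [inner_smul_right, inner_smul_right, ← RCLike.mul_conj, inner_conj_symm]
  ring

theorem re_inner_map_self_le_of_forall_lt_inner_eq_zero [LinearOrder ι]
    (b : OrthonormalBasis ι 𝕜 E) {T : E →ₗ[𝕜] E} {ρ : ι → ℝ} (hρ : Antitone ρ)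
    (hT : ∀ i, T (b i) = (ρ i : 𝕜) • b i) {j : ι} {x : E}
    (hx : ∀ r < j, inner 𝕜 (b r) x = 0) :
    RCLike.re (inner 𝕜 x (T x)) ≤ ρ j * ‖x‖ ^ 2 := by
  have term_le (i : ι) : ρ i * ‖inner 𝕜 (b i) x‖ ^ 2 ≤ ρ j * ‖inner 𝕜 (b i) x‖ ^ 2 := by
    rcases lt_or_ge i j with hij | hji
    · simp [hx i hij]
    · exact mul_le_mul_of_nonneg_right (hρ hji) (sq_nonneg _)
  calc RCLike.re (inner 𝕜 x (T x)) = ∑ i, ρ i * ‖inner 𝕜 (b i) x‖ ^ 2 := by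
        rw [inner_map_self_eq_sum_mul_sq_norm_inner b hT]
        exact_mod_cast RCLike.ofReal_re (K := 𝕜) _
    _ ≤ ∑ i, ρ j * ‖inner 𝕜 (b i) x‖ ^ 2 := Finset.sum_le_sum fun i _ => term_le i
    _ = ρ j * ‖x‖ ^ 2 := by rw [← Finset.mul_sum, b.sum_sq_norm_inner_right]

end Eigenbasis

namespace IsInvSqrt

variable {F : Type*} [NormedAddCommGroup F] [InnerProductSpace ℝ F] [CompleteSpace F]
  {A S : F →L[ℝ] F}

theorem inner_map_left (h : IsInvSqrt A S) (x y : F) : ⟪S x, y⟫ = ⟪x, S y⟫ :=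
  h.1.isSymmetric x y

theorem surjective (h : IsInvSqrt A S) : Function.Surjective S := fun x =>
  ⟨S (A x), DFunLike.congr_fun h.2.1 x⟩

theorem conj_eq_one (h : IsInvSqrt A S) : S ∘L A ∘L S = 1 := by
  ext x
  obtain ⟨y, rfl⟩ := h.surjective x
  exact congrArg S (DFunLike.congr_fun h.2.2 y)

theorem inner_map_comp_map (h : IsInvSqrt A S) (x y : F) : ⟪S x, A (S y)⟫ = ⟪x, y⟫ := by
  rw [h.inner_map_left]
  exact congrArg (inner ℝ x) (DFunLike.congr_fun h.conj_eq_one y)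

theorem inner_map_self_le_of_forall_lt_inner_eq_zero {ι : Type*} [Fintype ι] [LinearOrder ι]
    (h : IsInvSqrt A S) {B : F →L[ℝ] F} (b : OrthonormalBasis ι ℝ F) {ρ : ι → ℝ}
    (hρ : Antitone ρ) (hb : ∀ i, (S ∘L B ∘L S) (b i) = ρ i • b i) {j : ι} {a : F}
    (ha : ∀ r < j, ⟪S (b r), A a⟫ = 0) :
    ⟪a, B a⟫ ≤ ρ j * ⟪a, A a⟫ := by
  obtain ⟨c, rfl⟩ := h.surjective a
  simp only [h.inner_map_comp_map] at ha ⊢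
  rw [h.inner_map_left, real_inner_self_eq_norm_sq]
  exact re_inner_map_self_le_of_forall_lt_inner_eq_zero b
    (T := (S ∘L B ∘L S).toLinearMap) hρ hb ha

end IsInvSqrt

section SecondMoment

variable {F G : Type*} [NormedAddCommGroup F] [InnerProductSpace ℝ F] [NormedAddCommGroup G]
  [NormedSpace ℝ G]

/-- The second-moment operator `E[Y ⊗ Y]`, which is the covariance operator of `Y` when `Y` is
centered; it is `0` by convention when `Y ⊗ Y` is not integrable. -/
def secondMoment (P : Measure Ω) (Y : Ω → F) : F →L[ℝ] F :=
  ∫ ω, tens (Y ω) (Y ω) ∂P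

variable {P : Measure Ω} {Y : Ω → F} {Z : Ω → G}

theorem integrable_tens (hY : MemLp Y 2 P) (hZ : MemLp Z 2 P) :
    Integrable (fun ω => tens (Y ω) (Z ω)) P :=
  memLp_one_iff_integrable.mp <|
    (ContinuousLinearMap.smulRightL ℝ F G ∘L innerSL ℝ).memLp_of_bilin (r := 1) hY hZ

theorem integral_tens_apply (hY : MemLp Y 2 P) (hZ : MemLp Z 2 P) (a : F) :
    (∫ ω, tens (Y ω) (Z ω) ∂P) a = ∫ ω, ⟪Y ω, a⟫ • Z ω ∂P :=
  integral_apply (integrable_tens hY hZ) a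

theorem integrable_inner_smul (hY : MemLp Y 2 P) (hZ : MemLp Z 2 P) (a : F) :
    Integrable (fun ω => ⟪Y ω, a⟫ • Z ω) P :=
  (integrable_tens hY hZ).apply_continuousLinearMap a

theorem inner_secondMoment_self [CompleteSpace F] (hY : MemLp Y 2 P) (a : F) :
    ⟪a, secondMoment P Y a⟫ = ∫ ω, ⟪a, Y ω⟫ ^ 2 ∂P := by
  rw [secondMoment, integral_tens_apply hY hY, ← integral_inner (integrable_inner_smul hY hY a)]
  simp only [inner_smul_right, real_inner_comm, sq]

end SecondMoment

theorem sum_adjoint_tau_comp_tau : ∑ k, adjoint (tau 𝓧 k) ∘L tau 𝓧 k = 1 := by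
  ext1 x
  refine ext_inner_left ℝ fun y => ?_
  simp only [sum_apply, comp_apply, inner_sum, adjoint_inner_right, PiLp.inner_apply]
  rfl

section Covariance

variable {P : Measure Ω} {X : Ω → PiLp 2 𝓧}

theorem vcov_eq_tau_comp_secondMoment (hX : MemLp X 2 P) (k l : Fin K) :
    Vcov P X k l = tau 𝓧 k ∘L secondMoment P X ∘L adjoint (tau 𝓧 l) := by
  have memLp_tau (i : Fin K) : MemLp (fun ω => tau 𝓧 i (X ω)) 2 P := (tau 𝓧 i).comp_memLp' hX
  ext1 a
  calc Vcov P X k l a = ∫ ω, ⟪tau 𝓧 l (X ω), a⟫ • tau 𝓧 k (X ω) ∂P :=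
        integral_tens_apply (memLp_tau l) (memLp_tau k) a
    _ = ∫ ω, tau 𝓧 k (⟪X ω, adjoint (tau 𝓧 l) a⟫ • X ω) ∂P := by
        simp only [adjoint_inner_right, map_smul]
    _ = tau 𝓧 k (secondMoment P X (adjoint (tau 𝓧 l) a)) := by
        rw [integral_comp_comm _ (integrable_inner_smul hX hX _), secondMoment,
          integral_tens_apply hX hX]

theorem phiOp_add_psiOp :
    PhiOp P X + PsiOp P X = ∑ k, ∑ l, adjoint (tau 𝓧 k) ∘L Vcov P X k l ∘L tau 𝓧 l := by
  rw [PhiOp, PsiOp, ← Finset.sum_add_distrib]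
  refine Finset.sum_congr rfl fun k _ => ?_
  rw [← Finset.add_sum_erase _ _ (Finset.mem_univ k),
    ← Finset.add_sum_erase _ _ (Finset.mem_univ k), if_pos rfl, zero_add]
  congr 1
  exact Finset.sum_congr rfl fun l hl => if_neg (Finset.ne_of_mem_erase hl)

theorem phiOp_add_psiOp_eq_secondMoment (hX : MemLp X 2 P) :
    PhiOp P X + PsiOp P X = secondMoment P X := by
  let Q (k : Fin K) : PiLp 2 𝓧 →L[ℝ] PiLp 2 𝓧 := adjoint (tau 𝓧 k) ∘L tau 𝓧 k
  have sum_Q : ∑ k, Q k = 1 := sum_adjoint_tau_comp_tau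
  calc PhiOp P X + PsiOp P X = ∑ k, ∑ l, Q k * secondMoment P X * Q l := by
        simp only [phiOp_add_psiOp, vcov_eq_tau_comp_secondMoment hX]
        rfl
    _ = (∑ k, Q k) * secondMoment P X * ∑ l, Q l := by
        simp only [Finset.sum_mul, Finset.mul_sum]
        exact Finset.sum_comm
    _ = secondMoment P X := by rw [sum_Q, one_mul, mul_one]

theorem inner_phiOp (a c : PiLp 2 𝓧) :
    ⟪a, PhiOp P X c⟫ = ∑ k, ⟪tau 𝓧 k a, Vcov P X k k (tau 𝓧 k c)⟫ := by
  simp only [PhiOp, sum_apply, inner_sum, comp_apply, adjoint_inner_right]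

theorem inner_psiOp_self (a : PiLp 2 𝓧) : ⟪a, PsiOp P X a⟫ = phiForm P X a := by
  simp only [PsiOp, phiForm, sum_apply, inner_sum]
  refine Finset.sum_congr rfl fun k _ => Finset.sum_congr rfl fun l _ => ?_
  split_ifs
  · simp
  · simp only [comp_apply, adjoint_inner_right]

theorem integral_sq_inner_eq (hX : MemLp X 2 P) (a : PiLp 2 𝓧) :
    ∫ ω, ⟪a, X ω⟫ ^ 2 ∂P = ⟪a, PhiOp P X a⟫ + ⟪a, PsiOp P X a⟫ := by
  rw [← inner_secondMoment_self hX, ← phiOp_add_psiOp_eq_secondMoment hX, add_apply,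
    inner_add_right]

end Covariance

theorem stmt_3_general {ι : Type*} [Fintype ι] [LinearOrder ι] (P : Measure Ω)
    (X : Ω → PiLp 2 𝓧) (hXmeas : AEStronglyMeasurable X P)
    (hX2 : Integrable (fun ω => ‖X ω‖ ^ 2) P)
    (Φis : PiLp 2 𝓧 →L[ℝ] PiLp 2 𝓧) (hΦis : IsInvSqrt (PhiOp P X) Φis)
    (b : OrthonormalBasis ι ℝ (PiLp 2 𝓧)) (ρ : ι → ℝ)
    (hEig : ∀ j, (Φis ∘L PsiOp P X ∘L Φis) (b j) = ρ j • b j)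
    (hMono : Antitone ρ) (j : ι) :
    (∑ k, ⟪tau 𝓧 k (Φis (b j)), Vcov P X k k (tau 𝓧 k (Φis (b j)))⟫ = 1) ∧
    (∀ r, r < j → ∑ k, ⟪tau 𝓧 k (Φis (b r)), Vcov P X k k (tau 𝓧 k (Φis (b j)))⟫ = 0) ∧
    (∀ a : PiLp 2 𝓧,
      (∑ k, ⟪tau 𝓧 k a, Vcov P X k k (tau 𝓧 k a)⟫ = 1) →
      (∀ r, r < j → ∑ k, ⟪tau 𝓧 k (Φis (b r)), Vcov P X k k (tau 𝓧 k a)⟫ = 0) →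
      ∫ ω, ⟪a, X ω⟫ ^ 2 ∂P ≤ ∫ ω, ⟪Φis (b j), X ω⟫ ^ 2 ∂P) ∧
    ρ j = ⟪b j, (Φis ∘L PsiOp P X ∘L Φis) (b j)⟫ ∧
    ρ j = phiForm P X (Φis (b j)) := by
  have hX : MemLp X 2 P := (memLp_two_iff_integrable_sq_norm hXmeas).mpr hX2
  have normalized : ⟪Φis (b j), PhiOp P X (Φis (b j))⟫ = 1 := by
    rw [hΦis.inner_map_comp_map, b.inner_eq_one]
  have rho_eq : ρ j = ⟪b j, (Φis ∘L PsiOp P X ∘L Φis) (b j)⟫ := by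
    rw [hEig, inner_smul_right, b.inner_eq_one, mul_one]
  have rho_eq_psi : ρ j = ⟪Φis (b j), PsiOp P X (Φis (b j))⟫ := by
    rw [hΦis.inner_map_left]
    exact rho_eq
  simp only [← inner_phiOp, ← inner_psiOp_self, integral_sq_inner_eq hX]
  refine ⟨normalized, fun r hr => ?_, fun a ha ha_orth => ?_, rho_eq, rho_eq_psi⟩
  · rw [hΦis.inner_map_comp_map, b.inner_eq_zero hr.ne]
  · have psi_le : ⟪a, PsiOp P X a⟫ ≤ ρ j * ⟪a, PhiOp P X a⟫ :=
      hΦis.inner_map_self_le_of_forall_lt_inner_eq_zero b hMono hEig ha_orth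
    rw [ha, mul_one] at psi_le
    rw [ha, normalized, ← rho_eq_psi]
    gcongr

/-- If `{β^{(1)},…,β^{(q)}}` (here `b`) is an orthonormal basis of `𝓧`
consisting of eigenvectors of `T = Φ^{-1/2} Ψ Φ^{-1/2}` with eigenvalues in nonincreasing
order, and `α^{(j)} = Φ^{-1/2} β^{(j)}`, then each `α^{(j)}` lies in the constraint set `C_j`,
maximizes `E[⟨α, X⟩²]` over `C_j`, and `ρ_j = ⟨β^{(j)}, Tβ^{(j)}⟩ = φ(α^{(j)})`. -/
theorem stmt_3 (hK : 2 ≤ K) (P : Measure Ω) [IsProbabilityMeasure P]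
    (X : Ω → PiLp 2 𝓧) (hXmeas : AEStronglyMeasurable X P)
    (hX2 : Integrable (fun ω => ‖X ω‖ ^ 2) P)
    (hX0 : ∫ ω, X ω ∂P = 0)
    (hVunit : ∀ k, IsUnit (Vcov P X k k))
    (Φis : PiLp 2 𝓧 →L[ℝ] PiLp 2 𝓧) (hΦis : IsInvSqrt (PhiOp P X) Φis)
    (b : OrthonormalBasis (Fin (Module.finrank ℝ (PiLp 2 𝓧))) ℝ (PiLp 2 𝓧))
    (ρ : Fin (Module.finrank ℝ (PiLp 2 𝓧)) → ℝ)
    (hEig : ∀ j, (Φis ∘L PsiOp P X ∘L Φis) (b j) = ρ j • b j)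
    (hMono : Antitone ρ) :
    ∀ j,
      (∑ k, ⟪tau 𝓧 k (Φis (b j)), Vcov P X k k (tau 𝓧 k (Φis (b j)))⟫ = 1) ∧
      (∀ r, r < j → ∑ k, ⟪tau 𝓧 k (Φis (b r)), Vcov P X k k (tau 𝓧 k (Φis (b j)))⟫ = 0) ∧
      (∀ a : PiLp 2 𝓧,
        (∑ k, ⟪tau 𝓧 k a, Vcov P X k k (tau 𝓧 k a)⟫ = 1) →
        (∀ r, r < j → ∑ k, ⟪tau 𝓧 k (Φis (b r)), Vcov P X k k (tau 𝓧 k a)⟫ = 0) →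
        ∫ ω, ⟪a, X ω⟫ ^ 2 ∂P ≤ ∫ ω, ⟪Φis (b j), X ω⟫ ^ 2 ∂P) ∧
      ρ j = ⟪b j, (Φis ∘L PsiOp P X ∘L Φis) (b j)⟫ ∧
      ρ j = phiForm P X (Φis (b j)) :=
  stmt_3_general P X hXmeas hX2 Φis hΦis b ρ hEig hMono
end
end

section
/- Every eigenvalue ρ of the self-adjoint operator T satisfies −1 ≤ ρ ≤ K(K−1). -/
open MeasureTheory ContinuousLinearMap Filter
open scoped RealInnerProductSpace Topology NNReal

noncomputable section
open scoped Classical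

variable {K : ℕ}

variable {𝓧 : Fin K → Type*} [∀ k, NormedAddCommGroup (𝓧 k)]
  [∀ k, InnerProductSpace ℝ (𝓧 k)] [∀ k, FiniteDimensional ℝ (𝓧 k)]
variable {Ω : Type*} [MeasurableSpace Ω]

/-!
Write `Z_k = ⟪y_k, X_k⟫`. Then `⟪y, Φ y⟫ = E[∑ k, Z_k²]`, while completing `Ψ` by the diagonal
blocks gives `⟪y, (Φ + Ψ) y⟫ = E[(∑ k, Z_k)²]`. The latter is nonnegative and, by Cauchy–Schwarz,
at most `K ⟪y, Φ y⟫`, so `-Φ ≤ Ψ ≤ (K - 1) Φ` as quadratic forms. Conjugating by `Φ^{-1/2}` turns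
`Φ` into the identity and bounds the spectrum of `T` by `-1` and `K - 1`, and `K - 1 ≤ K (K - 1)`.
-/

namespace IsInvSqrt

variable {F : Type*} [NormedAddCommGroup F] [InnerProductSpace ℝ F] [CompleteSpace F]
  {A B S : F →L[ℝ] F} {x : F} {c C ρ : ℝ}

theorem mul_mul_eq_one (h : IsInvSqrt A S) : S * (A * S) = 1 := by
  obtain ⟨-, hleft, hright⟩ := h
  have hcomm : A * S = S * A := left_inv_eq_right_inv hright hleft
  rw [hcomm, ← mul_assoc]
  exact hleft

theorem inner_apply_eq_norm_sq (h : IsInvSqrt A S) (x : F) : ⟪S x, A (S x)⟫ = ‖x‖ ^ 2 := by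
  have hSAS : S (A (S x)) = x := DFunLike.congr_fun h.mul_mul_eq_one x
  rw [h.1.isSymmetric.apply_clm, hSAS, real_inner_self_eq_norm_sq]

theorem mem_Icc_of_apply_eq_smul (h : IsInvSqrt A S)
    (hc : ∀ y, c * ⟪y, A y⟫ ≤ ⟪y, B y⟫) (hC : ∀ y, ⟪y, B y⟫ ≤ C * ⟪y, A y⟫)
    (hx : x ≠ 0) (hρ : (S ∘L B ∘L S) x = ρ • x) : ρ ∈ Set.Icc c C := by
  have hB : ⟪S x, B (S x)⟫ = ρ * ‖x‖ ^ 2 := by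
    have hSBS : S (B (S x)) = ρ • x := hρ
    rw [h.1.isSymmetric.apply_clm, hSBS, real_inner_smul_right, real_inner_self_eq_norm_sq]
  have hxpos : 0 < ‖x‖ ^ 2 := by positivity
  have hlower := hc (S x)
  have hupper := hC (S x)
  rw [hB, h.inner_apply_eq_norm_sq] at hlower hupper
  exact ⟨le_of_mul_le_mul_right hlower hxpos, le_of_mul_le_mul_right hupper hxpos⟩

end IsInvSqrt

section RankOne

variable {F G : Type*} [NormedAddCommGroup F] [InnerProductSpace ℝ F]
  [NormedAddCommGroup G] {P : Measure Ω} {f : Ω → F} {g : Ω → G}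

theorem integrable_tens_s4 [NormedSpace ℝ G] {p q : ENNReal} [p.HolderTriple q 1]
    (hf : MemLp f p P) (hg : MemLp g q P) : Integrable (fun ω => tens (f ω) (g ω)) P :=
  memLp_one_iff_integrable.1 <| (smulRightL ℝ F G ∘L innerSL ℝ).memLp_of_bilin 1 hf hg

theorem inner_integral_tens_apply [InnerProductSpace ℝ G] [CompleteSpace G]
    (hfg : Integrable (fun ω => tens (f ω) (g ω)) P) (a : F) (b : G) :
    ⟪b, (∫ ω, tens (f ω) (g ω) ∂P) a⟫ = ∫ ω, ⟪b, g ω⟫ * ⟪a, f ω⟫ ∂P := by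
  rw [ContinuousLinearMap.integral_apply hfg, ← integral_inner (hfg.apply_continuousLinearMap a)]
  simp only [tens, smulRight_apply, innerSL_apply_apply, real_inner_smul_right,
    real_inner_comm, mul_comm]

end RankOne

theorem sq_inner_le_card_mul_sum_sq_inner {ι : Type*} [Fintype ι] {E : ι → Type*}
    [∀ i, NormedAddCommGroup (E i)] [∀ i, InnerProductSpace ℝ (E i)] (x y : PiLp 2 E) :
    ⟪x, y⟫ ^ 2 ≤ Fintype.card ι * ∑ i, ⟪x i, y i⟫ ^ 2 := by
  rw [PiLp.inner_apply]
  exact sq_sum_le_card_mul_sum_sq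

theorem tau_apply {n : ℕ} {E : Fin n → Type*} [∀ i, NormedAddCommGroup (E i)]
    [∀ i, InnerProductSpace ℝ (E i)] (i : Fin n) (x : PiLp 2 E) : tau E i x = x i :=
  rfl

section Covariance

variable {P : Measure Ω} {X : Ω → PiLp 2 𝓧}

theorem inner_Vcov_apply (hX : MemLp X 2 P) {k l : Fin K} (a : 𝓧 l) (b : 𝓧 k) :
    ⟪b, Vcov P X k l a⟫ = ∫ ω, ⟪b, X ω k⟫ * ⟪a, X ω l⟫ ∂P :=
  inner_integral_tens_apply (integrable_tens_s4 (hX.eval_piLp l) (hX.eval_piLp k)) a b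

theorem inner_PhiOp_apply_self (hX : MemLp X 2 P) (y : PiLp 2 𝓧) :
    ⟪y, PhiOp P X y⟫ = ∫ ω, ∑ k, ⟪y k, X ω k⟫ ^ 2 ∂P := by
  calc ⟪y, PhiOp P X y⟫
      = ∑ k, ∫ ω, ⟪y k, X ω k⟫ ^ 2 ∂P := by
        simp only [PhiOp, sum_apply, inner_sum, comp_apply, adjoint_inner_right,
          inner_Vcov_apply hX, tau_apply, pow_two]
    _ = ∫ ω, ∑ k, ⟪y k, X ω k⟫ ^ 2 ∂P :=
        (integral_finsetSum _ fun k _ =>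
          ((hX.eval_piLp k).const_inner (y k)).integrable_sq).symm

theorem PhiOp_add_PsiOp (P : Measure Ω) (X : Ω → PiLp 2 𝓧) :
    PhiOp P X + PsiOp P X = ∑ k, ∑ l, adjoint (tau 𝓧 k) ∘L Vcov P X k l ∘L tau 𝓧 l := by
  rw [PhiOp, PsiOp, ← Finset.sum_add_distrib]
  refine Finset.sum_congr rfl fun k _ => ?_
  rw [← Finset.add_sum_erase _ _ (Finset.mem_univ k),
    ← Finset.add_sum_erase _ _ (Finset.mem_univ k), if_pos rfl, zero_add]
  congr 1
  exact Finset.sum_congr rfl fun l hl => if_neg (Finset.ne_of_mem_erase hl)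

theorem inner_PhiOp_add_PsiOp_apply_self (hX : MemLp X 2 P) (y : PiLp 2 𝓧) :
    ⟪y, (PhiOp P X + PsiOp P X) y⟫ = ∫ ω, ⟪y, X ω⟫ ^ 2 ∂P := by
  have hint (k l : Fin K) : Integrable (fun ω => ⟪y k, X ω k⟫ * ⟪y l, X ω l⟫) P :=
    ((hX.eval_piLp k).const_inner (y k)).integrable_mul ((hX.eval_piLp l).const_inner (y l))
  calc ⟪y, (PhiOp P X + PsiOp P X) y⟫
      = ∑ k, ∑ l, ∫ ω, ⟪y k, X ω k⟫ * ⟪y l, X ω l⟫ ∂P := by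
        simp only [PhiOp_add_PsiOp, sum_apply, inner_sum, comp_apply, adjoint_inner_right,
          inner_Vcov_apply hX, tau_apply]
    _ = ∫ ω, ∑ k, ∑ l, ⟪y k, X ω k⟫ * ⟪y l, X ω l⟫ ∂P := by
        rw [integral_finsetSum _ fun k _ => integrable_finsetSum _ fun l _ => hint k l]
        simp only [integral_finsetSum _ fun l _ => hint _ l]
    _ = ∫ ω, ⟪y, X ω⟫ ^ 2 ∂P := by
        simp only [PiLp.inner_apply, pow_two, Finset.sum_mul_sum]

theorem neg_inner_PhiOp_le_inner_PsiOp (hX : MemLp X 2 P) (y : PiLp 2 𝓧) :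
    -⟪y, PhiOp P X y⟫ ≤ ⟪y, PsiOp P X y⟫ := by
  have hnonneg : 0 ≤ ⟪y, (PhiOp P X + PsiOp P X) y⟫ := by
    rw [inner_PhiOp_add_PsiOp_apply_self hX]
    exact integral_nonneg fun ω => sq_nonneg _
  rw [add_apply, inner_add_right] at hnonneg
  linarith

theorem inner_PsiOp_le_sub_one_mul_inner_PhiOp (hX : MemLp X 2 P) (y : PiLp 2 𝓧) :
    ⟪y, PsiOp P X y⟫ ≤ (K - 1) * ⟪y, PhiOp P X y⟫ := by
  have hle : ⟪y, (PhiOp P X + PsiOp P X) y⟫ ≤ K * ⟪y, PhiOp P X y⟫ := by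
    rw [inner_PhiOp_add_PsiOp_apply_self hX, inner_PhiOp_apply_self hX, ← integral_const_mul]
    refine integral_mono (hX.const_inner y).integrable_sq ?_ fun ω => ?_
    · exact (integrable_finsetSum _ fun k _ =>
        ((hX.eval_piLp k).const_inner (y k)).integrable_sq).const_mul _
    · simpa only [Fintype.card_fin] using sq_inner_le_card_mul_sum_sq_inner y (X ω)
  rw [add_apply, inner_add_right] at hle
  linarith

theorem stmt_4_general (hX : MemLp X 2 P) {Φis : PiLp 2 𝓧 →L[ℝ] PiLp 2 𝓧}
    (hΦis : IsInvSqrt (PhiOp P X) Φis) {ρ : ℝ} {x : PiLp 2 𝓧} (hx : x ≠ 0)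
    (hρ : (Φis ∘L PsiOp P X ∘L Φis) x = ρ • x) : -1 ≤ ρ ∧ ρ ≤ (K : ℝ) - 1 :=
  hΦis.mem_Icc_of_apply_eq_smul
    (fun y => by simpa only [neg_one_mul] using neg_inner_PhiOp_le_inner_PsiOp hX y)
    (inner_PsiOp_le_sub_one_mul_inner_PhiOp hX) hx hρ

end Covariance

/-- Every eigenvalue `ρ` of the self-adjoint operator
`T = Φ^{-1/2} Ψ Φ^{-1/2}` satisfies `-1 ≤ ρ ≤ K(K-1)`. -/
theorem stmt_4 (hK : 2 ≤ K) (P : Measure Ω) [IsProbabilityMeasure P]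
    (X : Ω → PiLp 2 𝓧) (hXmeas : AEStronglyMeasurable X P)
    (hX2 : Integrable (fun ω => ‖X ω‖ ^ 2) P)
    (hX0 : ∫ ω, X ω ∂P = 0)
    (hVunit : ∀ k, IsUnit (Vcov P X k k))
    (Φis : PiLp 2 𝓧 →L[ℝ] PiLp 2 𝓧) (hΦis : IsInvSqrt (PhiOp P X) Φis) :
    ∀ (ρ : ℝ) (x : PiLp 2 𝓧), x ≠ 0 → (Φis ∘L PsiOp P X ∘L Φis) x = ρ • x →
      -1 ≤ ρ ∧ ρ ≤ (K : ℝ) * ((K : ℝ) - 1) := by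
  have hK' : (2 : ℝ) ≤ K := by exact_mod_cast hK
  exact fun ρ x hx hρ =>
    (stmt_4_general ((memLp_two_iff_integrable_sq_norm hXmeas).2 hX2) hΦis hx hρ).imp_right
      fun hle => by nlinarith
end
end

section
/- Suppose K = 2 and set S = V₁^{−1/2} V₁₂ V₂^{−1/2} : 𝓧₂ → 𝓧₁. Let ρ ≠ 0 and x₁ ∈ 𝓧₁ with x₁ ≠ 0 satisfy S S* x₁ = ρ² x₁, and set x₂ = ρ^{−1} S* x₁ and x = τ₁* x₁ + τ₂* x₂. Then T x = ρ x, and moreover ‖x₁‖₁ = ‖x₂‖₂ = ‖x‖_𝓧 / √2. -/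
open MeasureTheory ContinuousLinearMap Filter
open scoped RealInnerProductSpace Topology NNReal

noncomputable section
open scoped Classical

variable {K : ℕ}

variable {𝓧 : Fin K → Type*} [∀ k, NormedAddCommGroup (𝓧 k)]
  [∀ k, InnerProductSpace ℝ (𝓧 k)] [∀ k, FiniteDimensional ℝ (𝓧 k)]
variable {Ω : Type*} [MeasurableSpace Ω]

/-!
Positive square roots are unique, so `Φ^{-1/2}` is the block diagonal operator with diagonal
entries `V_k^{-1/2}`. Hence `T` has the off-diagonal blocks `V_k^{-1/2} V_{kℓ} V_ℓ^{-1/2}`: for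
`K = 2` it is the Jordan–Wielandt matrix `[[0, S], [S*, 0]]` of `S`, whose eigenvectors are the
pairs of left and right singular vectors of `S`.

For the uniqueness of the square root, let `A² = B²` and put `C = A - B`, `M = A + B`. Then
`|⟨C x, x⟩| ≤ ⟨M x, x⟩` and `⟨C x, M x⟩ = 0`. If `x` is a unit vector with `C x ≈ μ x`,
`|μ| = ‖C‖`, the latter gives `μ ⟨x, M x⟩ ≈ 0`, the former `|μ| ≲ ⟨x, M x⟩`, and so `C = 0`.
-/

section SquareRoot

open RCLike

variable {𝕜 E : Type*} [RCLike 𝕜] [NormedAddCommGroup E] [InnerProductSpace 𝕜 E]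

lemma rayleighQuotient_mul_norm_sq (T : E →L[𝕜] E) (x : E) :
    T.rayleighQuotient x * ‖x‖ ^ 2 = re (inner 𝕜 (T x) x) := by
  rcases eq_or_ne x 0 with rfl | hx
  · simp
  · rw [rayleighQuotient, reApplyInnerSelf_apply, div_mul_cancel₀ _ (by simpa using hx)]

lemma norm_apply_sub_rayleighQuotient_smul_sq (T : E →L[𝕜] E) (x : E) :
    ‖T x - (T.rayleighQuotient x : 𝕜) • x‖ ^ 2 =
      ‖T x‖ ^ 2 - T.rayleighQuotient x ^ 2 * ‖x‖ ^ 2 := by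
  rw [norm_sub_sq (𝕜 := 𝕜), inner_smul_right, re_ofReal_mul, ← rayleighQuotient_mul_norm_sq,
    norm_smul, norm_ofReal, mul_pow, sq_abs]
  ring

lemma rayleighQuotient_sq_mul_norm_sq_le {C M : E →L[𝕜] E} {x : E}
    (hle : |re (inner 𝕜 (C x) x)| ≤ re (inner 𝕜 (M x) x))
    (horth : re (inner 𝕜 (C x) (M x)) = 0) :
    C.rayleighQuotient x ^ 2 * ‖x‖ ^ 2 ≤
      ‖C x - (C.rayleighQuotient x : 𝕜) • x‖ * (‖M‖ * ‖x‖) := by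
  set r := C.rayleighQuotient x with hr
  calc r ^ 2 * ‖x‖ ^ 2 = |r| * |re (inner 𝕜 (C x) x)| := by
        rw [← rayleighQuotient_mul_norm_sq, ← hr, abs_mul, abs_sq, ← mul_assoc, ← sq, sq_abs]
    _ ≤ |r| * |re (inner 𝕜 (M x) x)| :=
        mul_le_mul_of_nonneg_left (hle.trans (le_abs_self _)) (abs_nonneg r)
    _ = |re (inner 𝕜 (C x - (r : 𝕜) • x) (M x))| := by
        rw [inner_sub_left, map_sub, horth, inner_smul_left, conj_ofReal, re_ofReal_mul,
          inner_re_symm x, zero_sub, abs_neg, abs_mul]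
    _ ≤ ‖C x - (r : 𝕜) • x‖ * ‖M x‖ := (abs_re_le_norm _).trans (norm_inner_le_norm _ _)
    _ ≤ ‖C x - (r : 𝕜) • x‖ * (‖M‖ * ‖x‖) := by gcongr; exact M.le_opNorm x

lemma rayleighQuotient_pow_four_le {C M : E →L[𝕜] E} {x : E}
    (hle : |re (inner 𝕜 (C x) x)| ≤ re (inner 𝕜 (M x) x))
    (horth : re (inner 𝕜 (C x) (M x)) = 0) :
    C.rayleighQuotient x ^ 4 ≤ ‖M‖ ^ 2 * (‖C‖ ^ 2 - C.rayleighQuotient x ^ 2) := by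
  rcases eq_or_ne x 0 with rfl | hx
  · simpa using by positivity
  have hsq := rayleighQuotient_sq_mul_norm_sq_le hle horth
  have hresidual := norm_apply_sub_rayleighQuotient_smul_sq C x
  set r := C.rayleighQuotient x
  have hnorm : ‖C x‖ ^ 2 ≤ (‖C‖ * ‖x‖) ^ 2 := by gcongr; exact C.le_opNorm x
  refine le_of_mul_le_mul_right ?_ (show 0 < (‖x‖ ^ 2) ^ 2 by positivity)
  calc r ^ 4 * (‖x‖ ^ 2) ^ 2 = (r ^ 2 * ‖x‖ ^ 2) ^ 2 := by ring
    _ ≤ (‖C x - (r : 𝕜) • x‖ * (‖M‖ * ‖x‖)) ^ 2 := by gcongr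
    _ = (‖C x‖ ^ 2 - r ^ 2 * ‖x‖ ^ 2) * (‖M‖ * ‖x‖) ^ 2 := by rw [mul_pow, hresidual]
    _ ≤ ((‖C‖ * ‖x‖) ^ 2 - r ^ 2 * ‖x‖ ^ 2) * (‖M‖ * ‖x‖) ^ 2 := by gcongr
    _ = ‖M‖ ^ 2 * (‖C‖ ^ 2 - r ^ 2) * (‖x‖ ^ 2) ^ 2 := by ring

lemma eq_zero_of_abs_re_inner_le_of_re_inner_eq_zero {C M : E →L[𝕜] E} (hC : C.IsSymmetric)
    (hle : ∀ x, |re (inner 𝕜 (C x) x)| ≤ re (inner 𝕜 (M x) x))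
    (horth : ∀ x, re (inner 𝕜 (C x) (M x)) = 0) : C = 0 := by
  have hclosed : IsClosed {t : ℝ | t ^ 4 ≤ ‖M‖ ^ 2 * (‖C‖ ^ 2 - t ^ 2)} :=
    isClosed_le (by fun_prop) (by fun_prop)
  have hrange : Set.range (fun x ↦ |C.rayleighQuotient x|) ⊆
      {t : ℝ | t ^ 4 ≤ ‖M‖ ^ 2 * (‖C‖ ^ 2 - t ^ 2)} := by
    rintro _ ⟨x, rfl⟩
    simpa only [Set.mem_ofPred_eq, sq_abs, Even.pow_abs (by decide : Even 4)]
      using rayleighQuotient_pow_four_le (hle x) (horth x)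
  have hnorm : ‖C‖ ∈ closure (Set.range fun x ↦ |C.rayleighQuotient x|) := by
    nth_rw 1 [norm_eq_iSup_rayleighQuotient C hC]
    exact csSup_mem_closure (Set.range_nonempty _) C.bddAbove_rayleighQuotient
  have hpow : ‖C‖ ^ 4 ≤ ‖M‖ ^ 2 * (‖C‖ ^ 2 - ‖C‖ ^ 2) := closure_minimal hrange hclosed hnorm
  rw [sub_self, mul_zero] at hpow
  exact norm_eq_zero.1 (pow_eq_zero_iff four_ne_zero |>.1 (hpow.antisymm (by positivity)))

lemma eq_of_isPositive_of_comp_self_eq {A B : E →L[𝕜] E} (hA : A.IsPositive) (hB : B.IsPositive)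
    (h : A ∘L A = B ∘L B) : A = B := by
  refine sub_eq_zero.1 (eq_zero_of_abs_re_inner_le_of_re_inner_eq_zero (M := A + B)
    (hA.isSymmetric.sub hB.isSymmetric) (fun x ↦ ?_) fun x ↦ ?_)
  · have hAx := hA.re_inner_nonneg_left x
    have hBx := hB.re_inner_nonneg_left x
    rw [sub_apply, add_apply, inner_sub_left, inner_add_left, map_sub, map_add, abs_le]
    constructor <;> linarith
  · have hsq : inner 𝕜 (A x) (A x) = inner 𝕜 (B x) (B x) := by
      rw [← hA.inner_left_eq_inner_right, ← hB.inner_left_eq_inner_right]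
      exact congrArg (inner 𝕜 · x) (DFunLike.congr_fun h x)
    rw [sub_apply, add_apply, inner_sub_left, inner_add_right, inner_add_right, hsq]
    simp only [map_sub, map_add, inner_re_symm (A x) (B x)]
    ring

end SquareRoot

lemma IsInvSqrt.unique {F : Type*} [NormedAddCommGroup F] [InnerProductSpace ℝ F] [CompleteSpace F]
    {A R S : F →L[ℝ] F} (hR : IsInvSqrt A R) (hS : IsInvSqrt A S) : R = S :=
  eq_of_isPositive_of_comp_self_eq hR.1 hS.1 (left_inv_eq_right_inv (a := A) hR.2.1 hS.2.2)

section Block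

variable {𝓗 : Fin K → Type*} [∀ k, NormedAddCommGroup (𝓗 k)] [∀ k, InnerProductSpace ℝ (𝓗 k)]

lemma tau_ext {u v : PiLp 2 𝓗} (h : ∀ k, tau 𝓗 k u = tau 𝓗 k v) : u = v :=
  PiLp.ext h

variable [∀ k, CompleteSpace (𝓗 k)]

lemma adjoint_tau_apply (k : Fin K) (y : 𝓗 k) : adjoint (tau 𝓗 k) y = PiLp.single 2 k y := by
  refine ext_inner_right ℝ fun v ↦ ?_
  rw [adjoint_inner_left, PiLp.inner_apply, Finset.sum_eq_single_of_mem k (Finset.mem_univ k)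
    fun l _ hl ↦ by rw [PiLp.single_eq_of_ne 2 hl, inner_zero_left], PiLp.single_eq_same]
  rfl

lemma tau_adjoint_tau_self (k : Fin K) (y : 𝓗 k) : tau 𝓗 k (adjoint (tau 𝓗 k) y) = y := by
  rw [adjoint_tau_apply]
  exact PiLp.single_eq_same 2 k y

lemma tau_adjoint_tau_of_ne {k l : Fin K} (h : k ≠ l) (y : 𝓗 l) :
    tau 𝓗 k (adjoint (tau 𝓗 l) y) = 0 := by
  rw [adjoint_tau_apply]
  exact PiLp.single_eq_of_ne 2 h y

lemma tau_sum_adjoint_tau (y : ∀ k, 𝓗 k) (k : Fin K) :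
    tau 𝓗 k (∑ l, adjoint (tau 𝓗 l) (y l)) = y k := by
  rw [map_sum, Finset.sum_eq_single_of_mem k (Finset.mem_univ k)
    fun l _ hl ↦ tau_adjoint_tau_of_ne hl.symm _, tau_adjoint_tau_self]

/-- The block diagonal operator `Σ_k τ_k* D_k τ_k`; `Φ` is the one with entries `V_k`. -/
def blockDiag (D : ∀ k, 𝓗 k →L[ℝ] 𝓗 k) : PiLp 2 𝓗 →L[ℝ] PiLp 2 𝓗 :=
  ∑ k, adjoint (tau 𝓗 k) ∘L D k ∘L tau 𝓗 k

/-- The operator `Σ_{k≠ℓ} τ_k* A_{kℓ} τ_ℓ` with off-diagonal blocks `A_{kℓ}` and zero diagonal;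
`Ψ` is the one with blocks `V_{kℓ}`. The entries `A_{kk}` are ignored. -/
def blockOffDiag (A : ∀ k l, 𝓗 l →L[ℝ] 𝓗 k) : PiLp 2 𝓗 →L[ℝ] PiLp 2 𝓗 :=
  ∑ k, ∑ l, if l = k then 0 else adjoint (tau 𝓗 k) ∘L A k l ∘L tau 𝓗 l

lemma tau_blockDiag_apply (D : ∀ k, 𝓗 k →L[ℝ] 𝓗 k) (k : Fin K) (x : PiLp 2 𝓗) :
    tau 𝓗 k (blockDiag D x) = D k (tau 𝓗 k x) := by
  rw [blockDiag, sum_apply]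
  exact tau_sum_adjoint_tau (fun l ↦ D l (tau 𝓗 l x)) k

lemma tau_blockOffDiag_apply (A : ∀ k l, 𝓗 l →L[ℝ] 𝓗 k) (k : Fin K) (x : PiLp 2 𝓗) :
    tau 𝓗 k (blockOffDiag A x) = ∑ l, if l = k then 0 else A k l (tau 𝓗 l x) := by
  have hrows : blockOffDiag A x =
      ∑ j, adjoint (tau 𝓗 j) (∑ l, if l = j then 0 else A j l (tau 𝓗 l x)) := by
    simp only [blockOffDiag, sum_apply, map_sum]
    refine Finset.sum_congr rfl fun j _ ↦ Finset.sum_congr rfl fun l _ ↦ ?_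
    split_ifs <;> simp
  rw [hrows, tau_sum_adjoint_tau]

lemma blockDiag_one : blockDiag (fun k ↦ (1 : 𝓗 k →L[ℝ] 𝓗 k)) = 1 := by
  ext1 x
  exact tau_ext fun k ↦ tau_blockDiag_apply _ k x

lemma blockDiag_comp_blockDiag (D D' : ∀ k, 𝓗 k →L[ℝ] 𝓗 k) :
    blockDiag D ∘L blockDiag D' = blockDiag fun k ↦ D k ∘L D' k := by
  ext1 x
  exact tau_ext fun k ↦ by simp only [comp_apply, tau_blockDiag_apply]

lemma blockDiag_comp_blockOffDiag_comp_blockDiag (D D' : ∀ k, 𝓗 k →L[ℝ] 𝓗 k)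
    (A : ∀ k l, 𝓗 l →L[ℝ] 𝓗 k) :
    blockDiag D ∘L blockOffDiag A ∘L blockDiag D' =
      blockOffDiag fun k l ↦ D k ∘L A k l ∘L D' l := by
  ext1 x
  refine tau_ext fun k ↦ ?_
  simp only [comp_apply, tau_blockDiag_apply, tau_blockOffDiag_apply, map_sum, apply_ite (D k),
    map_zero]

lemma isPositive_blockDiag {D : ∀ k, 𝓗 k →L[ℝ] 𝓗 k} (hD : ∀ k, (D k).IsPositive) :
    (blockDiag D).IsPositive :=
  isPositive_sum _ fun k _ ↦ (hD k).adjoint_conj (tau 𝓗 k)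

lemma IsInvSqrt.blockDiag {A R : ∀ k, 𝓗 k →L[ℝ] 𝓗 k} (hR : ∀ k, IsInvSqrt (A k) (R k)) :
    IsInvSqrt (blockDiag A) (blockDiag R) := by
  refine ⟨isPositive_blockDiag fun k ↦ (hR k).1, ?_, ?_⟩
  · simp only [blockDiag_comp_blockDiag, (hR _).2.1, blockDiag_one]
  · simp only [blockDiag_comp_blockDiag, (hR _).2.2, blockDiag_one]

end Block

section SingularPair

lemma norm_eq_of_apply_eq_smul_of_adjoint_apply_eq_smul {𝕜 E F : Type*} [RCLike 𝕜]
    [NormedAddCommGroup E] [InnerProductSpace 𝕜 E] [CompleteSpace E]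
    [NormedAddCommGroup F] [InnerProductSpace 𝕜 F] [CompleteSpace F]
    {S : E →L[𝕜] F} {ρ : 𝕜} (hρ : ρ ≠ 0) {u : F} {v : E}
    (hv : S v = ρ • u) (hu : adjoint S u = ρ • v) : ‖u‖ = ‖v‖ := by
  have hinner : inner 𝕜 (ρ • u) u = inner 𝕜 v (ρ • v) := by
    rw [← hv, ← hu, adjoint_inner_right]
  have hsq : ‖ρ‖ * ‖u‖ ^ 2 = ‖ρ‖ * ‖v‖ ^ 2 := by
    simpa [inner_smul_left, inner_smul_right, inner_self_eq_norm_sq_to_K] using congrArg norm hinner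
  exact (sq_eq_sq₀ (norm_nonneg u) (norm_nonneg v)).1 (mul_left_cancel₀ (norm_ne_zero_iff.2 hρ) hsq)

lemma norm_eq_sqrt_card_mul_of_forall_norm_eq {ι : Type*} [Fintype ι] {E : ι → Type*}
    [∀ i, SeminormedAddCommGroup (E i)] {x : PiLp 2 E} {j : ι} (h : ∀ i, ‖x i‖ = ‖x j‖) :
    ‖x‖ = √(Fintype.card ι) * ‖x j‖ := by
  simp only [PiLp.norm_eq_of_L2, h, Finset.sum_const, Finset.card_univ, nsmul_eq_mul]
  rw [Real.sqrt_mul (Nat.cast_nonneg _), Real.sqrt_sq (norm_nonneg _)]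

variable {𝓗 : Fin 2 → Type*} [∀ k, NormedAddCommGroup (𝓗 k)] [∀ k, InnerProductSpace ℝ (𝓗 k)]

lemma norm_tau_eq_norm_div_sqrt_two {x : PiLp 2 𝓗} (h : ‖tau 𝓗 0 x‖ = ‖tau 𝓗 1 x‖) (k : Fin 2) :
    ‖tau 𝓗 k x‖ = ‖x‖ / √2 := by
  have hnorm : ‖x‖ = √(Fintype.card (Fin 2)) * ‖tau 𝓗 k x‖ :=
    norm_eq_sqrt_card_mul_of_forall_norm_eq fun i ↦ by
      fin_cases i <;> fin_cases k <;> first | rfl | exact h | exact h.symm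
  rw [eq_div_iff (by positivity), mul_comm, hnorm, Fintype.card_fin, Nat.cast_ofNat]

lemma blockOffDiag_apply_eq_smul [∀ k, CompleteSpace (𝓗 k)] {A : ∀ k l, 𝓗 l →L[ℝ] 𝓗 k} {ρ : ℝ}
    {x : PiLp 2 𝓗} (h₀ : A 0 1 (tau 𝓗 1 x) = ρ • tau 𝓗 0 x)
    (h₁ : A 1 0 (tau 𝓗 0 x) = ρ • tau 𝓗 1 x) : blockOffDiag A x = ρ • x := by
  refine tau_ext (Fin.forall_fin_two.2 ⟨?_, ?_⟩) <;>
    simp [tau_blockOffDiag_apply, h₀, h₁]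

end SingularPair

section Covariance

lemma adjoint_tens {F G : Type*} [NormedAddCommGroup F] [InnerProductSpace ℝ F] [CompleteSpace F]
    [NormedAddCommGroup G] [InnerProductSpace ℝ G] [CompleteSpace G] (x : F) (y : G) :
    adjoint (tens x y) = tens y x :=
  InnerProductSpace.adjoint_rankOne y x

lemma adjoint_integral {𝕜 E F : Type*} [RCLike 𝕜]
    [NormedAddCommGroup E] [InnerProductSpace 𝕜 E] [CompleteSpace E]
    [NormedAddCommGroup F] [InnerProductSpace 𝕜 F] [CompleteSpace F]
    [NormedSpace ℝ (E →L[𝕜] F)] [NormedSpace ℝ (F →L[𝕜] E)]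
    (μ : Measure Ω) (f : Ω → E →L[𝕜] F) :
    adjoint (∫ ω, f ω ∂μ) = ∫ ω, adjoint (f ω) ∂μ :=
  ((adjoint.toLinearEquiv.toAddEquiv.toRealLinearEquiv adjoint.continuous
    adjoint.symm.continuous).integral_comp_comm f).symm

lemma adjoint_Vcov {𝓗 : Fin K → Type*} [∀ k, NormedAddCommGroup (𝓗 k)]
    [∀ k, InnerProductSpace ℝ (𝓗 k)] [∀ k, CompleteSpace (𝓗 k)]
    (P : Measure Ω) (X : Ω → PiLp 2 𝓗) (k l : Fin K) :
    adjoint (Vcov P X k l) = Vcov P X l k := by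
  simp only [Vcov, adjoint_integral, adjoint_tens]

end Covariance

theorem stmt_8_general {𝓗 : Fin 2 → Type*} [∀ k, NormedAddCommGroup (𝓗 k)]
    [∀ k, InnerProductSpace ℝ (𝓗 k)] [∀ k, CompleteSpace (𝓗 k)]
    (V : ∀ k l, 𝓗 l →L[ℝ] 𝓗 k) (hV : adjoint (V 0 1) = V 1 0)
    (Vis : ∀ k, 𝓗 k →L[ℝ] 𝓗 k) (hVis : ∀ k, IsInvSqrt (V k k) (Vis k))
    (Φis : PiLp 2 𝓗 →L[ℝ] PiLp 2 𝓗) (hΦis : IsInvSqrt (blockDiag fun k ↦ V k k) Φis)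
    (S : 𝓗 1 →L[ℝ] 𝓗 0) (hS : S = Vis 0 ∘L V 0 1 ∘L Vis 1)
    (ρ : ℝ) (hρ : ρ ≠ 0) (x₁ : 𝓗 0) (hEig : (S ∘L adjoint S) x₁ = ρ ^ 2 • x₁)
    (x₂ : 𝓗 1) (hx₂ : x₂ = ρ⁻¹ • adjoint S x₁)
    (x : PiLp 2 𝓗) (hx : x = adjoint (tau 𝓗 0) x₁ + adjoint (tau 𝓗 1) x₂) :
    (Φis ∘L blockOffDiag V ∘L Φis) x = ρ • x ∧ ‖x₁‖ = ‖x‖ / √2 ∧ ‖x₂‖ = ‖x‖ / √2 := by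
  have hadj : adjoint S = Vis 1 ∘L V 1 0 ∘L Vis 0 := by
    rw [hS, adjoint_comp, adjoint_comp, hV, (hVis 0).1.isSelfAdjoint.adjoint_eq,
      (hVis 1).1.isSelfAdjoint.adjoint_eq, comp_assoc]
  have hright : adjoint S x₁ = ρ • x₂ := by rw [hx₂, smul_inv_smul₀ hρ]
  have hleft : S x₂ = ρ • x₁ := by
    rw [hx₂, map_smul, ← comp_apply, hEig, sq, mul_smul, inv_smul_smul₀ hρ]
  have hx_zero : tau 𝓗 0 x = x₁ := by
    rw [hx, map_add, tau_adjoint_tau_self, tau_adjoint_tau_of_ne zero_ne_one, add_zero]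
  have hx_one : tau 𝓗 1 x = x₂ := by
    rw [hx, map_add, tau_adjoint_tau_self, tau_adjoint_tau_of_ne one_ne_zero, zero_add]
  subst hx_zero hx_one
  have hnorm := norm_eq_of_apply_eq_smul_of_adjoint_apply_eq_smul hρ hleft hright
  refine ⟨?_, norm_tau_eq_norm_div_sqrt_two hnorm 0, norm_tau_eq_norm_div_sqrt_two hnorm 1⟩
  rw [hΦis.unique (IsInvSqrt.blockDiag hVis), blockDiag_comp_blockOffDiag_comp_blockDiag]
  exact blockOffDiag_apply_eq_smul (hS ▸ hleft) (hadj ▸ hright)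

/-- When `K = 2`, with `S = V₁^{-1/2} V₁₂ V₂^{-1/2}`: if `ρ ≠ 0`,
`x₁ ≠ 0` satisfies `S S* x₁ = ρ² x₁`, and `x₂ = ρ⁻¹ S* x₁`, `x = τ₁* x₁ + τ₂* x₂`,
then `T x = ρ x` and `‖x₁‖ = ‖x₂‖ = ‖x‖ / √2`. -/
theorem stmt_8 {𝓨 : Fin 2 → Type*} [∀ k, NormedAddCommGroup (𝓨 k)]
    [∀ k, InnerProductSpace ℝ (𝓨 k)] [∀ k, FiniteDimensional ℝ (𝓨 k)]
    (P : Measure Ω) [IsProbabilityMeasure P]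
    (X : Ω → PiLp 2 𝓨) (hXmeas : AEStronglyMeasurable X P)
    (hX2 : Integrable (fun ω => ‖X ω‖ ^ 2) P)
    (hX0 : ∫ ω, X ω ∂P = 0)
    (hVunit : ∀ k, IsUnit (Vcov P X k k))
    (Vis : ∀ k, 𝓨 k →L[ℝ] 𝓨 k) (hVis : ∀ k, IsInvSqrt (Vcov P X k k) (Vis k))
    (Φis : PiLp 2 𝓨 →L[ℝ] PiLp 2 𝓨) (hΦis : IsInvSqrt (PhiOp P X) Φis)
    (S : 𝓨 1 →L[ℝ] 𝓨 0) (hS : S = Vis 0 ∘L Vcov P X 0 1 ∘L Vis 1)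
    (ρ : ℝ) (hρ : ρ ≠ 0) (x₁ : 𝓨 0) (hx₁ : x₁ ≠ 0)
    (hEig : (S ∘L ContinuousLinearMap.adjoint S) x₁ = ρ ^ 2 • x₁)
    (x₂ : 𝓨 1) (hx₂ : x₂ = ρ⁻¹ • ContinuousLinearMap.adjoint S x₁)
    (x : PiLp 2 𝓨)
    (hx : x = ContinuousLinearMap.adjoint (tau 𝓨 0) x₁ +
      ContinuousLinearMap.adjoint (tau 𝓨 1) x₂) :
    (Φis ∘L PsiOp P X ∘L Φis) x = ρ • x ∧
    ‖x₁‖ = ‖x‖ / Real.sqrt 2 ∧ ‖x₂‖ = ‖x‖ / Real.sqrt 2 :=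
  stmt_8_general (Vcov P X) (adjoint_Vcov P X 0 1) Vis hVis Φis hΦis S hS ρ hρ x₁ hEig x₂ hx₂ x hx
end
end
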